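/- Fix 0 ≤ γ ≤ 1 and suppose there is a constant M > 0 such that B̃_n((t−x)²;x) ≤ M·x·(1+x)/n for all n ≥ 2 and x ≥ 0. Then there exist a constant D > 0 and an integer n₀ such that for every bounded continuous f:[0,∞)→ℝ, every integer n ≥ n₀ and every x > 0, |B̃_n(f;x) − f(x)| ≤ D·ω_{χ^γ}( f ; χ(x)^{1−γ}/√n ), where χ(x) = √(x(1+x)) and ω_{χ^γ} is the Ditzian–Totik modulus of smoothness. -/

import Mathlib

open Real MeasureTheory Filter Topology

/-- `p_n(x) = n² x² T(1) + n x U(1) + V(1)`. -/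
noncomputable def pnx (T U V : ℝ → ℝ) (n : ℕ) (x : ℝ) : ℝ :=
  (n : ℝ) ^ 2 * x ^ 2 * T 1 + (n : ℝ) * x * U 1 + V 1

/-- The Euler Beta function value `B(j, n+1) = Γ(j)Γ(n+1)/Γ(j+n+1)`. -/
noncomputable def betaB (j n : ℕ) : ℝ :=
  Real.Gamma (j : ℝ) * Real.Gamma ((n : ℝ) + 1) / Real.Gamma ((j : ℝ) + (n : ℝ) + 1)

/-- The Baskakov–Durrmeyer type operator `B̃_n(f;x)`. -/
noncomputable def BDop (ξ S T U V : ℝ → ℝ) (Θ : ℕ → ℝ → ℝ) (n : ℕ) (f : ℝ → ℝ) (x : ℝ) : ℝ :=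
  (S 1 * ξ (pnx T U V n x))⁻¹ *
    (Θ 0 ((n : ℝ) * x) * f 0 +
      ∑' j : ℕ, (Θ (j + 1) ((n : ℝ) * x) / betaB (j + 1) n) *
        ∫ s in Set.Ioi (0 : ℝ), s ^ j * (1 + s) ^ (-((n : ℝ) + (j : ℝ) + 2)) * f s)

/-- `χ(x) = √(x(1+x))`. -/
noncomputable def chi (x : ℝ) : ℝ := Real.sqrt (x * (1 + x))

/-- The Ditzian–Totik modulus of smoothness `ω_{χ^γ}(f, δ)` on `[0,∞)`. -/
noncomputable def dtMod (f : ℝ → ℝ) (γ δ : ℝ) : ℝ :=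
  sSup {d : ℝ | ∃ h x : ℝ, 0 < h ∧ h ≤ δ ∧ 0 ≤ x - h * chi x ^ γ / 2 ∧
    d = |f (x + h * chi x ^ γ / 2) - f (x - h * chi x ^ γ / 2)|}

/-! ### Beta-prime integrals -/

noncomputable def KK (a b : ℕ) (s : ℝ) : ℝ := s ^ a * (1 + s) ^ (-((b : ℝ) + (a : ℝ) + 2))

lemma KK_nonneg (a b : ℕ) {s : ℝ} (hs : 0 < s) : 0 ≤ KK a b s := by
  unfold KK; positivity

lemma KK_mul (a b : ℕ) (s : ℝ) : KK a (b + 1) s * s = KK (a + 1) b s := by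
  unfold KK
  have : (-(((b + 1 : ℕ) : ℝ) + (a : ℝ) + 2)) = (-((b : ℝ) + ((a + 1 : ℕ) : ℝ) + 2)) := by
    push_cast; ring
  rw [this]; ring

lemma KK_cont (a b : ℕ) : ContinuousOn (KK a b) (Set.Ici 0) := by
  unfold KK
  apply ContinuousOn.mul (by fun_prop)
  apply ContinuousOn.rpow_const (by fun_prop)
  intro s hs
  left
  have : (0:ℝ) ≤ s := hs
  positivity

lemma KK_le (a b : ℕ) {s : ℝ} (hs : 0 < s) : KK a b s ≤ (1 + s) ^ (-((b : ℝ) + 2)) := by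
  unfold KK
  have h1 : (0:ℝ) < 1 + s := by linarith
  have h2 : (1 + s) ^ (-((b : ℝ) + 2)) = (1+s)^a * (1 + s) ^ (-((b : ℝ) + (a : ℝ) + 2)) := by
    rw [← Real.rpow_natCast (1+s) a, ← Real.rpow_add h1]; congr 1; ring
  rw [h2]
  gcongr
  linarith

lemma rp_int (c : ℝ) (hc : c < -1) :
    IntegrableOn (fun s : ℝ => (1 + s) ^ c) (Set.Ioi 0) := by
  have h := integrableOn_add_rpow_Ioi_of_lt (a := c) (c := 0) (m := 1) hc (by norm_num)
  simpa [add_comm] using h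

lemma KK_int (a b : ℕ) : IntegrableOn (KK a b) (Set.Ioi 0) := by
  have h := rp_int (-((b : ℝ) + 2)) (by have : (0:ℝ) ≤ b := by positivity
                                        linarith)
  refine Integrable.mono' h
    (((KK_cont a b).mono Set.Ioi_subset_Ici_self).aestronglyMeasurable measurableSet_Ioi) ?_
  refine (ae_restrict_iff' measurableSet_Ioi).2 (Eventually.of_forall fun s hs => ?_)
  rw [Real.norm_eq_abs, abs_of_nonneg (KK_nonneg a b hs)]
  exact KK_le a b hs

lemma KK_integral_zero (b : ℕ) : ∫ s in Set.Ioi (0:ℝ), KK 0 b s = 1 / ((b : ℝ) + 1) := by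
  have hb : (0:ℝ) ≤ b := by positivity
  have h := integral_Ioi_of_hasDerivAt_of_tendsto (a := (0:ℝ)) (m := 0)
    (f := fun s : ℝ => -(1 + s) ^ (-((b:ℝ) + 1)) / ((b:ℝ)+1)) (f' := KK 0 b) ?_ ?_ (KK_int 0 b) ?_
  · rw [h]; simp
    ring
  · apply ContinuousAt.continuousWithinAt
    apply ContinuousAt.div_const
    apply ContinuousAt.neg
    exact ContinuousAt.rpow_const (by fun_prop) (by left; norm_num)
  · intro s hs
    have hs' : (0:ℝ) < s := hs
    have h1 : HasDerivAt (fun s : ℝ => 1 + s) 1 s := (hasDerivAt_id s).const_add 1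
    have h2 := ((h1.rpow_const (p := -((b:ℝ)+1)) (by left; positivity)).neg).div_const ((b:ℝ)+1)
    refine HasDerivAt.congr_deriv (f := fun s : ℝ => -(1 + s) ^ (-((b:ℝ) + 1)) / ((b:ℝ)+1)) h2 ?_
    unfold KK
    have : -((b:ℝ)+1) - 1 = -((b:ℝ) + ((0:ℕ):ℝ) + 2) := by push_cast; ring
    rw [this]
    field_simp
  · have h1 : Tendsto (fun s : ℝ => 1 + s) atTop atTop := tendsto_atTop_add_const_left _ _ tendsto_id
    have h2 := (tendsto_rpow_neg_atTop (y := (b:ℝ)+1) (by positivity)).comp h1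
    have h3 := (h2.neg).div_const ((b:ℝ)+1)
    simpa using h3

lemma KK_integral_succ (a b : ℕ) : ∫ s in Set.Ioi (0:ℝ), KK (a+1) b s
    = ((a : ℝ) + 1) / ((a : ℝ) + b + 2) * ∫ s in Set.Ioi (0:ℝ), KK a b s := by
  have hb : (0:ℝ) ≤ b := by positivity
  have ha : (0:ℝ) ≤ a := by positivity
  have hI : IntegrableOn (fun s => ((a:ℝ)+1) * KK a b s - ((a:ℝ)+b+2) * KK (a+1) b s) (Set.Ioi 0) :=
    ((KK_int a b).const_mul _).sub ((KK_int (a+1) b).const_mul _)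
  have h := integral_Ioi_of_hasDerivAt_of_tendsto (a := (0:ℝ)) (m := 0)
    (f := fun s : ℝ => s ^ (a+1) * (1 + s) ^ (-((b:ℝ) + a + 2)))
    (f' := fun s => ((a:ℝ)+1) * KK a b s - ((a:ℝ)+b+2) * KK (a+1) b s) ?_ ?_ hI ?_
  · rw [integral_sub ((KK_int a b).const_mul _) ((KK_int (a+1) b).const_mul _),
      integral_const_mul, integral_const_mul] at h
    simp only [ne_eq, Nat.add_eq_zero_iff, one_ne_zero, and_false, not_false_eq_true, zero_pow, zero_mul, sub_zero] at h
    field_simp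
    linarith
  · apply ContinuousAt.continuousWithinAt
    apply ContinuousAt.mul (by fun_prop)
    exact ContinuousAt.rpow_const (by fun_prop) (by left; norm_num)
  · intro s hs
    have hs' : (0:ℝ) < s := hs
    have h1 : HasDerivAt (fun s : ℝ => 1 + s) 1 s := (hasDerivAt_id s).const_add 1
    have h2 := (hasDerivAt_pow (a+1) s).mul
      (h1.rpow_const (p := -((b:ℝ)+a+2)) (by left; positivity))
    refine HasDerivAt.congr_deriv
      (f := fun s : ℝ => s ^ (a+1) * (1 + s) ^ (-((b:ℝ) + a + 2))) h2 ?_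
    unfold KK
    have : -((b:ℝ)+a+2) - 1 = -((b:ℝ) + ((a+1:ℕ):ℝ) + 2) := by push_cast; ring
    rw [this]
    push_cast
    ring
  · have h1 : Tendsto (fun s : ℝ => 1 + s) atTop atTop := tendsto_atTop_add_const_left _ _ tendsto_id
    have h2 := (tendsto_rpow_neg_atTop (y := (b:ℝ)+1) (by positivity)).comp h1
    refine tendsto_of_tendsto_of_tendsto_of_le_of_le' tendsto_const_nhds h2 ?_ ?_
    · filter_upwards [eventually_gt_atTop 0] with s hs
      positivity
    · filter_upwards [eventually_gt_atTop 0] with s hs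
      have h1 : (0:ℝ) < 1 + s := by linarith
      have h2 : (1 + s) ^ (-((b : ℝ) + 1)) = (1+s)^(a+1) * (1 + s) ^ (-((b : ℝ) + (a : ℝ) + 2)) := by
        rw [← Real.rpow_natCast (1+s) (a+1), ← Real.rpow_add h1]; congr 1; push_cast; ring
      simp only [Function.comp]
      rw [h2]
      gcongr
      linarith

lemma KK_integral (a b : ℕ) : ∫ s in Set.Ioi (0:ℝ), KK a b s
    = (a.factorial : ℝ) * b.factorial / ((a + b + 1).factorial : ℝ) := by
  induction a with
  | zero =>
    rw [KK_integral_zero]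
    rw [show 0 + b + 1 = b + 1 by ring, Nat.factorial_succ]
    have : (b.factorial : ℝ) ≠ 0 := by positivity
    push_cast
    field_simp
    simp
  | succ a ih =>
    rw [KK_integral_succ, ih]
    rw [show a + 1 + b + 1 = (a + b + 1) + 1 by ring, Nat.factorial_succ (a+b+1), Nat.factorial_succ a]
    have : ((a+b+1).factorial : ℝ) ≠ 0 := by positivity
    generalize (a+b+1).factorial = w at *
    push_cast
    field_simp
    ring

lemma betaB_eq (i n : ℕ) : betaB (i+1) n = ∫ s in Set.Ioi (0:ℝ), KK i n s := by
  rw [KK_integral, betaB]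
  have h1 : Real.Gamma ((i+1 : ℕ) : ℝ) = i.factorial := by
    push_cast; exact Real.Gamma_nat_eq_factorial i
  have h3 : Real.Gamma (((i+1 : ℕ) : ℝ) + n + 1) = (i+n+1).factorial := by
    rw [← Real.Gamma_nat_eq_factorial]; congr 1; push_cast; ring
  rw [h1, h3, Real.Gamma_nat_eq_factorial]

lemma betaB_pos (i n : ℕ) : 0 < betaB (i+1) n := by
  rw [betaB_eq, KK_integral]; positivity

lemma mom1 (i k : ℕ) : ∫ s in Set.Ioi (0:ℝ), KK i (k+1) s * s
    = betaB (i+1) (k+1) * (((i:ℝ)+1) / ((k:ℝ)+1)) := by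
  simp_rw [KK_mul]
  rw [betaB_eq, KK_integral, KK_integral, show i + 1 + k + 1 = i + (k+1) + 1 by ring,
    Nat.factorial_succ i, Nat.factorial_succ k]
  have : ((i+(k+1)+1).factorial : ℝ) ≠ 0 := by positivity
  push_cast
  field_simp

lemma mom2 (i k : ℕ) : ∫ s in Set.Ioi (0:ℝ), KK i (k+2) s * s ^ 2
    = betaB (i+1) (k+2) * (((i:ℝ)+1) * ((i:ℝ)+2) / (((k:ℝ)+2) * ((k:ℝ)+1))) := by
  have : ∀ s, KK i (k+2) s * s^2 = KK (i+2) k s := by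
    intro s; rw [← KK_mul, ← KK_mul]; ring
  simp_rw [this]
  rw [betaB_eq, KK_integral, KK_integral, show i + 2 + k + 1 = i + (k+2) + 1 by ring,
    Nat.factorial_succ (i+1), Nat.factorial_succ i, Nat.factorial_succ (k+1), Nat.factorial_succ k]
  have : ((i+(k+2)+1).factorial : ℝ) ≠ 0 := by positivity
  push_cast
  field_simp
  ring

lemma momInv_aux (i n : ℕ) {s : ℝ} (hs : 0 < s) : KK (i+1) n s * s⁻¹ = KK i (n+1) s := by
  rw [← KK_mul]; field_simp

lemma momInv (i n : ℕ) : ∫ s in Set.Ioi (0:ℝ), KK (i+1) n s * s⁻¹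
    = betaB (i+2) n * (((n:ℝ)+1) / ((i:ℝ)+1)) := by
  rw [setIntegral_congr_fun measurableSet_Ioi (fun s hs => momInv_aux i n hs)]
  rw [show i + 2 = (i+1)+1 from rfl, betaB_eq, KK_integral, KK_integral, show i + 1 + n + 1 = i + (n+1) + 1 by ring,
    Nat.factorial_succ i, Nat.factorial_succ n]
  have : ((i+(n+1)+1).factorial : ℝ) ≠ 0 := by positivity
  push_cast
  field_simp

/-- the second central moment of the Beta-prime law attached to `j`. -/
noncomputable def mm (n : ℕ) (x : ℝ) (j : ℕ) : ℝ :=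
  (j:ℝ) * ((j:ℝ)+1) / ((n:ℝ) * ((n:ℝ) - 1)) - 2 * x * ((j:ℝ) / n) + x^2

lemma int1 (i k : ℕ) : IntegrableOn (fun s => KK i (k+1) s * s) (Set.Ioi 0) := by
  simp_rw [KK_mul]; exact KK_int _ _

lemma int2 (i k : ℕ) : IntegrableOn (fun s => KK i (k+2) s * s^2) (Set.Ioi 0) := by
  have : ∀ s, KK i (k+2) s * s^2 = KK (i+2) k s := by
    intro s; rw [← KK_mul, ← KK_mul]; ring
  simp_rw [this]; exact KK_int _ _

lemma intInv (i n : ℕ) : IntegrableOn (fun s => KK (i+1) n s * s⁻¹) (Set.Ioi 0) :=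
  (KK_int i (n+1)).congr_fun (fun s hs => (momInv_aux i n hs).symm) measurableSet_Ioi

lemma int_sq (i n : ℕ) (hn : 2 ≤ n) (x : ℝ) :
    IntegrableOn (fun s => KK i n s * (s - x)^2) (Set.Ioi 0) := by
  obtain ⟨k, rfl⟩ := Nat.exists_eq_add_of_le' hn
  have := ((int2 i k).sub ((int1 i (k+1)).const_mul (2*x))).add ((KK_int i (k+2)).const_mul (x^2))
  refine this.congr_fun (fun _ _ => ?_) measurableSet_Ioi
  simp only [Pi.add_apply, Pi.sub_apply]
  ring

lemma mom_sq (i n : ℕ) (hn : 2 ≤ n) (x : ℝ) :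
    ∫ s in Set.Ioi (0:ℝ), KK i n s * (s - x)^2 = betaB (i+1) n * mm n x (i+1) := by
  obtain ⟨k, rfl⟩ := Nat.exists_eq_add_of_le' hn
  have h : ∀ s, KK i (k+2) s * (s - x)^2
      = (KK i (k+2) s * s^2 - (2*x) * (KK i (k+2) s * s)) + x^2 * KK i (k+2) s := by
    intro s; ring
  simp_rw [h]
  have hA : IntegrableOn (fun s => KK i (k+2) s * s^2 - (2*x) * (KK i (k+2) s * s)) (Set.Ioi 0) :=
    (int2 i k).sub ((int1 i (k+1)).const_mul (2*x))
  rw [integral_add hA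
    ((KK_int i (k+2)).const_mul (x^2)),
    integral_sub (int2 i k) ((int1 i (k+1)).const_mul (2*x)), integral_const_mul,
    integral_const_mul, mom2, mom1 i (k+1), ← betaB_eq]
  unfold mm
  push_cast
  have e : (k:ℝ) + 2 - 1 = k + 1 := by ring
  rw [e]
  have : (k:ℝ) + 1 + 1 = k + 2 := by ring
  rw [this]
  field_simp
  ring

lemma int_sqi (i n : ℕ) (x : ℝ) (hn : 1 ≤ n) :
    IntegrableOn (fun s => KK (i+1) n s * ((s - x)^2 / (x * s))) (Set.Ioi 0) := by
  obtain ⟨k, rfl⟩ := Nat.exists_eq_add_of_le' hn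
  by_cases hx : x = 0
  · simp [hx]
  have hA : IntegrableOn (fun s => x⁻¹ * (KK (i+1) (k+1) s * s) - 2 * KK (i+1) (k+1) s)
      (Set.Ioi 0) := ((int1 (i+1) k).const_mul x⁻¹).sub ((KK_int (i+1) (k+1)).const_mul 2)
  have : IntegrableOn (fun s => (x⁻¹ * (KK (i+1) (k+1) s * s) - 2 * KK (i+1) (k+1) s)
      + x * (KK (i+1) (k+1) s * s⁻¹)) (Set.Ioi 0) := hA.add ((intInv i (k+1)).const_mul x)
  refine this.congr_fun (fun s hs => ?_) measurableSet_Ioi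
  have hs' : s ≠ 0 := ne_of_gt hs
  simp only
  field_simp
  ring

lemma mom_sqi (i n : ℕ) (x : ℝ) (hn : 1 ≤ n) (hx : 0 < x) :
    ∫ s in Set.Ioi (0:ℝ), KK (i+1) n s * ((s - x)^2 / (x * s))
      = betaB (i+2) n * (((i:ℝ)+2) / (n * x) - 2 + x * (((n:ℝ)+1) / ((i:ℝ)+1))) := by
  obtain ⟨k, rfl⟩ := Nat.exists_eq_add_of_le' hn
  have h : Set.EqOn (fun s => KK (i+1) (k+1) s * ((s - x)^2 / (x * s)))
      (fun s => (x⁻¹ * (KK (i+1) (k+1) s * s) - 2 * KK (i+1) (k+1) s)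
        + x * (KK (i+1) (k+1) s * s⁻¹)) (Set.Ioi 0) := by
    intro s hs
    have hs' : s ≠ 0 := ne_of_gt hs
    simp only
    field_simp
    ring
  rw [setIntegral_congr_fun measurableSet_Ioi h]
  have hA : IntegrableOn (fun s => x⁻¹ * (KK (i+1) (k+1) s * s) - 2 * KK (i+1) (k+1) s)
      (Set.Ioi 0) := ((int1 (i+1) k).const_mul x⁻¹).sub ((KK_int (i+1) (k+1)).const_mul 2)
  rw [integral_add hA
    ((intInv i (k+1)).const_mul x),
    integral_sub ((int1 (i+1) k).const_mul x⁻¹) ((KK_int (i+1) (k+1)).const_mul 2),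
    integral_const_mul, integral_const_mul, integral_const_mul, mom1, momInv, ← betaB_eq]
  push_cast
  field_simp
  ring

/-- averages of `f` against the kernels. -/
noncomputable def cc (f : ℝ → ℝ) (n : ℕ) : ℕ → ℝ
  | 0 => f 0
  | (i+1) => (∫ s in Set.Ioi (0:ℝ), KK i n s * f s) / betaB (i+1) n

lemma int_f (f : ℝ → ℝ) (hf : ContinuousOn f (Set.Ici 0)) (B : ℝ)
    (hB : ∀ y, 0 ≤ y → |f y| ≤ B) (i n : ℕ) :
    IntegrableOn (fun s => KK i n s * f s) (Set.Ioi 0) := by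
  refine Integrable.mono' ((KK_int i n).mul_const B)
    ((((KK_cont i n).mul hf).mono Set.Ioi_subset_Ici_self).aestronglyMeasurable measurableSet_Ioi) ?_
  refine (ae_restrict_iff' measurableSet_Ioi).2 (Eventually.of_forall fun s hs => ?_)
  have hs' : (0:ℝ) < s := hs
  rw [Real.norm_eq_abs, abs_mul, abs_of_nonneg (KK_nonneg i n hs)]
  exact mul_le_mul_of_nonneg_left (hB s hs'.le) (KK_nonneg i n hs)

lemma avg_le (f : ℝ → ℝ) (hf : ContinuousOn f (Set.Ici 0)) (B : ℝ)
    (hB : ∀ y, 0 ≤ y → |f y| ≤ B) (i n : ℕ) (L : ℝ) (P : ℝ → ℝ) (Q : ℝ)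
    (hP : IntegrableOn (fun s => KK i n s * P s) (Set.Ioi 0))
    (hQ : ∫ s in Set.Ioi (0:ℝ), KK i n s * P s = betaB (i+1) n * Q)
    (h : ∀ s, 0 < s → |f s - L| ≤ P s) : |cc f n (i+1) - L| ≤ Q := by
  have hb := betaB_pos i n
  have e : cc f n (i+1) - L = (∫ s in Set.Ioi (0:ℝ), KK i n s * (f s - L)) / betaB (i+1) n := by
    have : ∀ s, KK i n s * (f s - L) = KK i n s * f s - KK i n s * L := fun s => by ring
    simp_rw [this]
    rw [integral_sub (int_f f hf B hB i n) ((KK_int i n).mul_const L), integral_mul_const,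
      ← betaB_eq]
    simp only [cc]
    field_simp
  rw [e, abs_div, abs_of_pos hb, div_le_iff₀ hb, mul_comm Q, ← hQ, ← Real.norm_eq_abs]
  refine norm_integral_le_of_norm_le hP ?_
  refine (ae_restrict_iff' measurableSet_Ioi).2 (Eventually.of_forall fun s hs => ?_)
  rw [Real.norm_eq_abs, abs_mul, abs_of_nonneg (KK_nonneg i n hs)]
  exact mul_le_mul_of_nonneg_left (h s hs) (KK_nonneg i n hs)

/-! ### Chains -/

lemma dt_nonneg (f : ℝ → ℝ) (γ δ : ℝ) : 0 ≤ dtMod f γ δ := by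
  apply Real.sSup_nonneg
  rintro d ⟨h, x, _, _, _, rfl⟩
  exact abs_nonneg _

lemma chi_pos {x : ℝ} (hx : 0 < x) : 0 < chi x := by
  unfold chi; positivity

lemma chi_mono {a b : ℝ} (ha : 0 ≤ a) (hab : a ≤ b) : chi a ≤ chi b := by
  unfold chi; gcongr; linarith

lemma dt_step (f : ℝ → ℝ) (B : ℝ) (hB : ∀ y, 0 ≤ y → |f y| ≤ B) (γ δ a b : ℝ)
    (ha : 0 ≤ a) (hab : a ≤ b) (h : b - a ≤ δ * chi ((a+b)/2) ^ γ) :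
    |f b - f a| ≤ dtMod f γ δ := by
  rcases hab.eq_or_lt with rfl | hlt
  · simpa using dt_nonneg f γ δ
  have hm : 0 < (a+b)/2 := by linarith
  have hc : 0 < chi ((a+b)/2) ^ γ := Real.rpow_pos_of_pos (chi_pos hm) _
  apply le_csSup
  · refine ⟨B + B, ?_⟩
    rintro d ⟨h, x, h0, _, hx, rfl⟩
    have hx0 : 0 ≤ h * chi x ^ γ / 2 := by
      have : 0 ≤ chi x := Real.sqrt_nonneg _
      positivity
    exact (abs_sub _ _).trans (add_le_add (hB _ (by linarith)) (hB _ hx))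
  · refine ⟨(b-a) / chi ((a+b)/2) ^ γ, (a+b)/2, by apply div_pos <;> linarith, ?_, ?_, ?_⟩
    · rwa [div_le_iff₀ hc]
    · rw [div_mul_cancel₀ _ hc.ne']; linarith
    · rw [div_mul_cancel₀ _ hc.ne']
      congr 3 <;> ring

lemma chain (g : ℝ → ℝ) (w c a b : ℝ) (hw : 0 ≤ w) (hc : 0 < c) (hab : a ≤ b)
    (h : ∀ a' b', a ≤ a' → a' ≤ b' → b' ≤ b → b' - a' ≤ c → |g b' - g a'| ≤ w) :
    |g b - g a| ≤ (1 + (b - a) / c) * w := by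
  have key : ∀ N : ℕ, ∀ b', a ≤ b' → b' ≤ b → b' - a ≤ N * c → |g b' - g a| ≤ N * w := by
    intro N
    induction N with
    | zero =>
      intro b' h1 h2 h3
      have : b' = a := by simp at h3; linarith
      simp [this]
    | succ N ih =>
      intro b' h1 h2 h3
      push_cast at h3 ⊢
      by_cases hlt : b' - a ≤ c
      · have := h a b' le_rfl h1 h2 hlt
        have : 0 ≤ (N:ℝ) * w := by positivity
        linarith
      · have i1 := ih (b' - c) (by linarith) (by linarith) (by linarith)
        have i2 := h (b' - c) b' (by linarith) (by linarith) h2 (by linarith)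
        have := abs_sub_le (g b') (g (b'-c)) (g a)
        linarith
  have h0 : 0 ≤ (b-a)/c := div_nonneg (by linarith) hc.le
  have h1 := key ⌈(b-a)/c⌉₊ b hab le_rfl (by
    rw [← div_le_iff₀ hc]; exact Nat.le_ceil _)
  refine h1.trans (mul_le_mul_of_nonneg_right ?_ hw)
  linarith [Nat.ceil_lt_add_one h0]

lemma up_bound (f : ℝ → ℝ) (B : ℝ) (hB : ∀ y, 0 ≤ y → |f y| ≤ B) (γ : ℝ) (hγ0 : 0 ≤ γ)
    (n x t : ℝ) (hn : 0 < n) (hx : 0 < x) (ht : x ≤ t) :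
    |f t - f x| ≤ (2 + n * (t - x)^2 / chi x ^ 2) * dtMod f γ (chi x ^ (1 - γ) / √n) := by
  have hw := dt_nonneg f γ (chi x ^ (1 - γ) / √n)
  have hcx := chi_pos hx
  have hsn : 0 < √n := Real.sqrt_pos.2 hn
  have hc : 0 < chi x / √n := by positivity
  refine (chain f _ (chi x / √n) x t hw hc ht ?_).trans (mul_le_mul_of_nonneg_right ?_ hw)
  · intro a b h1 h2 h3 h4
    apply dt_step f B hB _ _ _ _ (by linarith) h2
    refine h4.trans ?_
    have e : chi x = chi x ^ (1-γ) * chi x ^ γ := by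
      rw [← Real.rpow_add hcx]; simp
    have : chi x ^ γ ≤ chi ((a+b)/2) ^ γ :=
      Real.rpow_le_rpow hcx.le (chi_mono hx.le (by linarith)) hγ0
    calc chi x / √n = chi x ^ (1-γ) / √n * chi x ^ γ := by rw [div_mul_eq_mul_div, ← e]
      _ ≤ _ := by gcongr
  · have e : n * (t-x)^2 / chi x ^2 = ((t-x)/(chi x/√n))^2 := by
      rw [div_div_eq_mul_div, div_pow, mul_pow, Real.sq_sqrt hn.le]; ring
    rw [e]
    nlinarith [sq_nonneg ((t-x)/(chi x/√n) - 1)]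

lemma down_step (f : ℝ → ℝ) (B : ℝ) (hB : ∀ y, 0 ≤ y → |f y| ≤ B) (γ : ℝ)
    (hγ1 : γ ≤ 1) (n x a b : ℝ) (hn : 0 < n) (hx : 0 < x) (ha : 0 ≤ a) (hab : a ≤ b)
    (hbx : b ≤ x) (h : b - a ≤ chi ((a+b)/2) / √n) :
    |f b - f a| ≤ dtMod f γ (chi x ^ (1 - γ) / √n) := by
  have hsn : 0 < √n := Real.sqrt_pos.2 hn
  rcases hab.eq_or_lt with rfl | hlt
  · simpa using dt_nonneg f γ _
  have hm : 0 < (a+b)/2 := by linarith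
  have hcm := chi_pos hm
  apply dt_step f B hB _ _ _ _ ha hab
  refine h.trans ?_
  have e : chi ((a+b)/2) = chi ((a+b)/2) ^ (1-γ) * chi ((a+b)/2) ^ γ := by
    rw [← Real.rpow_add hcm]; simp
  have : chi ((a+b)/2) ^ (1-γ) ≤ chi x ^ (1-γ) :=
    Real.rpow_le_rpow hcm.le (chi_mono hm.le (by linarith)) (by linarith)
  calc chi ((a+b)/2) / √n = chi ((a+b)/2) ^ (1-γ) * chi ((a+b)/2) ^ γ / √n := by rw [← e]
    _ ≤ chi x ^ (1-γ) * chi ((a+b)/2) ^ γ / √n := by gcongr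
    _ = _ := by ring

lemma down_chain (f : ℝ → ℝ) (B : ℝ) (hB : ∀ y, 0 ≤ y → |f y| ≤ B) (γ : ℝ)
    (hγ1 : γ ≤ 1) (n x t c : ℝ) (hn : 0 < n) (hx : 0 < x) (ht0 : 0 ≤ t) (ht : t ≤ x)
    (hc : 0 < c) (hstep : ∀ a b, √t ≤ a → a ≤ b → b - a ≤ c / √n →
      b^2 - a^2 ≤ chi ((a^2+b^2)/2) / √n) :
    |f t - f x| ≤ (2 + n * ((√x - √t) / (2 * c))^2) * dtMod f γ (chi x ^ (1 - γ) / √n) := by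
  have hw := dt_nonneg f γ (chi x ^ (1 - γ) / √n)
  have hsn : 0 < √n := Real.sqrt_pos.2 hn
  have h := chain (fun s => f (s^2)) (dtMod f γ (chi x ^ (1 - γ) / √n)) (c / √n) √t √x hw
    (by positivity) (Real.sqrt_le_sqrt ht) ?_
  · simp only [Real.sq_sqrt ht0, Real.sq_sqrt hx.le] at h
    rw [abs_sub_comm]
    refine h.trans (mul_le_mul_of_nonneg_right ?_ hw)
    have e : n * ((√x - √t) / (2 * c))^2 = ((√x - √t) / (c / √n))^2 / 4 := by
      rw [div_div_eq_mul_div, div_pow, div_pow, mul_pow, mul_pow, Real.sq_sqrt hn.le]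
      field_simp
      ring
    rw [e]
    nlinarith [sq_nonneg ((√x - √t) / (c / √n) - 2)]
  · intro a b h1 h2 h3 h4
    have ha : 0 ≤ a := (Real.sqrt_nonneg _).trans h1
    have : b^2 ≤ x := by
      rw [← Real.sq_sqrt hx.le]; gcongr
      linarith
    apply down_step f B hB γ hγ1 n x _ _ hn hx (by positivity) (by gcongr) this
    exact hstep a b h1 h2 h4

lemma sqrt_diff (x t : ℝ) (hx : 0 < x) (ht0 : 0 ≤ t) (ht : t ≤ x) :
    (√x - √t)^2 ≤ (t - x)^2 / x := by
  have h1 := Real.sq_sqrt hx.le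
  have h2 := Real.sq_sqrt ht0
  have h3 := Real.sqrt_nonneg x
  have h4 := Real.sqrt_nonneg t
  rw [le_div_iff₀ hx]
  have e : (t - x)^2 = (√x - √t)^2 * (√x + √t)^2 := by
    have : (√x - √t) * (√x + √t) = x - t := by rw [← h1, ← h2]; simp [h1, h2]; nlinarith
    rw [← mul_pow, this]
    ring
  rw [e]
  apply mul_le_mul_of_nonneg_left _ (sq_nonneg _)
  nlinarith [mul_nonneg h3 h4]

lemma down1 (f : ℝ → ℝ) (B : ℝ) (hB : ∀ y, 0 ≤ y → |f y| ≤ B) (γ : ℝ)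
    (hγ1 : γ ≤ 1) (n x t : ℝ) (hn : 0 < n) (hx : 0 < x) (ht0 : 0 ≤ t) (ht : t ≤ x) :
    |f t - f x| ≤ (2 + n * ((t - x)^2 / x)) * dtMod f γ (chi x ^ (1 - γ) / √n) := by
  have hw := dt_nonneg f γ (chi x ^ (1 - γ) / √n)
  refine (down_chain f B hB γ hγ1 n x t (1/2) hn hx ht0 ht (by norm_num) ?_).trans
    (mul_le_mul_of_nonneg_right ?_ hw)
  · intro a b h1 h2 h3
    have ha : 0 ≤ a := (Real.sqrt_nonneg _).trans h1
    have hm : (a+b)/2 ≤ chi ((a^2+b^2)/2) := by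
      unfold chi
      apply Real.le_sqrt_of_sq_le
      nlinarith [sq_nonneg (a-b), sq_nonneg (a^2+b^2)]
    calc b^2 - a^2 = (b - a) * (a + b) := by ring
      _ ≤ (1/2 / √n) * (a+b) := by gcongr; linarith
      _ = ((a+b)/2) / √n := by ring
      _ ≤ _ := by gcongr
  · have := sqrt_diff x t hx ht0 ht
    have e : (√x - √t) / (2 * (1/2)) = √x - √t := by ring
    rw [e]
    gcongr

lemma down2 (f : ℝ → ℝ) (B : ℝ) (hB : ∀ y, 0 ≤ y → |f y| ≤ B) (γ : ℝ)
    (hγ1 : γ ≤ 1) (n x t : ℝ) (hn : 0 < n) (hx : 0 < x) (ht0 : 0 < t) (ht : t ≤ x) :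
    |f t - f x| ≤ (2 + n * ((t - x)^2 / (x * t))) * dtMod f γ (chi x ^ (1 - γ) / √n) := by
  have hw := dt_nonneg f γ (chi x ^ (1 - γ) / √n)
  have hst : 0 < √t := Real.sqrt_pos.2 ht0
  refine (down_chain f B hB γ hγ1 n x t (√t/2) hn hx ht0.le ht (by positivity) ?_).trans
    (mul_le_mul_of_nonneg_right ?_ hw)
  · intro a b h1 h2 h3
    have ha : 0 ≤ a := (Real.sqrt_nonneg _).trans h1
    have hm : √t * (a+b)/2 ≤ chi ((a^2+b^2)/2) := by
      have hm2 : (a^2+b^2)/2 ≤ chi ((a^2+b^2)/2) := by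
        unfold chi
        apply Real.le_sqrt_of_sq_le
        nlinarith [sq_nonneg a, sq_nonneg b]
      refine le_trans ?_ hm2
      have : √t * (a+b) ≤ a * (a+b) := by gcongr; linarith
      nlinarith
    calc b^2 - a^2 = (b - a) * (a + b) := by ring
      _ ≤ (√t/2 / √n) * (a+b) := by gcongr; linarith
      _ = (√t * (a+b)/2) / √n := by ring
      _ ≤ _ := by gcongr
  · have := sqrt_diff x t hx ht0.le ht
    have e : ((√x - √t) / (2 * (√t/2)))^2 = (√x - √t)^2 / t := by
      rw [mul_div_cancel₀ _ (by norm_num : (2:ℝ) ≠ 0), div_pow, Real.sq_sqrt ht0.le]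
    rw [e, ← div_div]
    gcongr

lemma chi_sq {x : ℝ} (hx : 0 < x) : chi x ^ 2 = x * (1 + x) := by
  unfold chi; exact Real.sq_sqrt (by positivity)

lemma bound_small (f : ℝ → ℝ) (B : ℝ) (hB : ∀ y, 0 ≤ y → |f y| ≤ B) (γ : ℝ) (hγ0 : 0 ≤ γ)
    (hγ1 : γ ≤ 1) (n x t : ℝ) (hn : 0 < n) (hx : 0 < x) (hx1 : x ≤ 1) (ht0 : 0 ≤ t) :
    |f t - f x| ≤ (2 + 2 * n / (x * (1 + x)) * (t - x)^2)
      * dtMod f γ (chi x ^ (1 - γ) / √n) := by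
  have hw := dt_nonneg f γ (chi x ^ (1 - γ) / √n)
  rcases le_total x t with h | h
  · refine (up_bound f B hB γ hγ0 n x t hn hx h).trans (mul_le_mul_of_nonneg_right ?_ hw)
    rw [chi_sq hx]
    have e : n * (t-x)^2 / (x * (1+x)) = n / (x * (1+x)) * (t-x)^2 := by ring
    rw [e]
    have : n / (x * (1+x)) ≤ 2 * n / (x * (1+x)) := by gcongr; linarith
    gcongr
  · refine (down1 f B hB γ hγ1 n x t hn hx ht0 h).trans (mul_le_mul_of_nonneg_right ?_ hw)
    have e : n * ((t-x)^2 / x) = n / x * (t-x)^2 := by ring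
    rw [e]
    have : n / x ≤ 2 * n / (x * (1+x)) := by
      rw [div_le_div_iff₀ hx (by positivity)]
      nlinarith [mul_pos hn hx]
    gcongr

lemma bound_large1 (f : ℝ → ℝ) (B : ℝ) (hB : ∀ y, 0 ≤ y → |f y| ≤ B) (γ : ℝ) (hγ0 : 0 ≤ γ)
    (hγ1 : γ ≤ 1) (n x t : ℝ) (hn : 0 < n) (hx : 0 < x) (ht0 : 0 ≤ t) :
    |f t - f x| ≤ (2 + n / (x * (1 + x)) * (t - x)^2 + n * x)
      * dtMod f γ (chi x ^ (1 - γ) / √n) := by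
  have hw := dt_nonneg f γ (chi x ^ (1 - γ) / √n)
  rcases le_total x t with h | h
  · refine (up_bound f B hB γ hγ0 n x t hn hx h).trans (mul_le_mul_of_nonneg_right ?_ hw)
    rw [chi_sq hx]
    have e : n * (t-x)^2 / (x * (1+x)) = n / (x * (1+x)) * (t-x)^2 := by ring
    rw [e]
    have : 0 < n * x := by positivity
    linarith
  · refine (down1 f B hB γ hγ1 n x t hn hx ht0 h).trans (mul_le_mul_of_nonneg_right ?_ hw)
    have : (t-x)^2 / x ≤ x := by
      rw [div_le_iff₀ hx]; nlinarith
    have : n * ((t-x)^2 / x) ≤ n * x := by gcongr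
    have : 0 ≤ n / (x * (1 + x)) * (t - x)^2 := by positivity
    linarith

lemma bound_large2 (f : ℝ → ℝ) (B : ℝ) (hB : ∀ y, 0 ≤ y → |f y| ≤ B) (γ : ℝ) (hγ0 : 0 ≤ γ)
    (hγ1 : γ ≤ 1) (n x t : ℝ) (hn : 0 < n) (hx : 0 < x) (ht0 : 0 < t) :
    |f t - f x| ≤ (2 + n / (x * (1 + x)) * (t - x)^2 + n * ((t-x)^2 / (x*t)))
      * dtMod f γ (chi x ^ (1 - γ) / √n) := by
  have hw := dt_nonneg f γ (chi x ^ (1 - γ) / √n)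
  rcases le_total x t with h | h
  · refine (up_bound f B hB γ hγ0 n x t hn hx h).trans (mul_le_mul_of_nonneg_right ?_ hw)
    rw [chi_sq hx]
    have e : n * (t-x)^2 / (x * (1+x)) = n / (x * (1+x)) * (t-x)^2 := by ring
    rw [e]
    have : 0 ≤ n * ((t-x)^2 / (x*t)) := by positivity
    linarith
  · refine (down2 f B hB γ hγ1 n x t hn hx ht0 h).trans (mul_le_mul_of_nonneg_right ?_ hw)
    have : 0 ≤ n / (x * (1 + x)) * (t - x)^2 := by positivity
    linarith

/-! ### Averages and sums -/

lemma avg_sq (f : ℝ → ℝ) (hf : ContinuousOn f (Set.Ici 0)) (B : ℝ)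
    (hB : ∀ y, 0 ≤ y → |f y| ≤ B) (n : ℕ) (hn : 2 ≤ n) (x L α β : ℝ)
    (h : ∀ s, 0 ≤ s → |f s - L| ≤ α + β * (s - x)^2) (j : ℕ) :
    |cc f n j - L| ≤ α + β * mm n x j := by
  cases j with
  | zero =>
    have := h 0 le_rfl
    simpa [cc, mm] using this
  | succ i =>
    have e : ∀ s, KK i n s * (α + β * (s-x)^2) = KK i n s * α + β * (KK i n s * (s-x)^2) :=
      fun s => by ring
    have hi : IntegrableOn (fun s => KK i n s * α) (Set.Ioi 0) := (KK_int i n).mul_const α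
    have hi2 := (int_sq i n hn x).const_mul β
    refine avg_le f hf B hB i n L (fun s => α + β * (s-x)^2) _ ?_ ?_ (fun s hs => h s hs.le)
    · simp_rw [e]
      exact hi.add hi2
    · simp_rw [e]
      rw [integral_add hi hi2, integral_mul_const, integral_const_mul, mom_sq i n hn, ← betaB_eq]
      ring

lemma avg_sqi (f : ℝ → ℝ) (hf : ContinuousOn f (Set.Ici 0)) (B : ℝ)
    (hB : ∀ y, 0 ≤ y → |f y| ≤ B) (n : ℕ) (hn : 2 ≤ n) (x L α β κ : ℝ) (hx : 0 < x)
    (h : ∀ s, 0 < s → |f s - L| ≤ α + β * (s - x)^2 + κ * ((s-x)^2 / (x * s))) (i : ℕ) :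
    |cc f n (i+2) - L| ≤ α + β * mm n x (i+2)
      + κ * (((i:ℝ)+2) / (n * x) - 2 + x * (((n:ℝ)+1) / ((i:ℝ)+1))) := by
  have e : ∀ s, KK (i+1) n s * (α + β * (s-x)^2 + κ * ((s-x)^2 / (x * s)))
      = KK (i+1) n s * α + β * (KK (i+1) n s * (s-x)^2)
        + κ * (KK (i+1) n s * ((s-x)^2 / (x * s))) :=
    fun s => by ring
  have hi : IntegrableOn (fun s => KK (i+1) n s * α) (Set.Ioi 0) := (KK_int (i+1) n).mul_const α
  have hi2 := (int_sq (i+1) n hn x).const_mul β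
  have hi12 : IntegrableOn (fun s => KK (i+1) n s * α + β * (KK (i+1) n s * (s-x)^2))
    (Set.Ioi 0) := hi.add hi2
  have hi3 := (int_sqi i n x (by omega)).const_mul κ
  refine avg_le f hf B hB (i+1) n L (fun s => α + β * (s-x)^2 + κ * ((s-x)^2 / (x * s)))
    _ ?_ ?_ (fun s hs => h s hs)
  · simp_rw [e]
    exact hi12.add hi3
  · simp_rw [e]
    rw [integral_add hi12 hi3, integral_add hi hi2, integral_mul_const, integral_const_mul,
      integral_const_mul, mom_sq (i+1) n hn, mom_sqi i n x (by omega) hx, ← betaB_eq]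
    ring

lemma large_j (f : ℝ → ℝ) (hf : ContinuousOn f (Set.Ici 0)) (B : ℝ)
    (hB : ∀ y, 0 ≤ y → |f y| ≤ B) (γ : ℝ) (hγ0 : 0 ≤ γ) (hγ1 : γ ≤ 1)
    (n : ℕ) (hn : 4 ≤ n) (x : ℝ) (hx : 1 ≤ x) (j : ℕ) :
    |cc f n j - f x| ≤ dtMod f γ (chi x ^ (1 - γ) / √(n:ℝ)) *
      (9 + (n:ℝ) / (x * (1+x)) * mm n x j + 16 / (n * x) * ((j:ℝ) - n * x)^2) := by
  set w := dtMod f γ (chi x ^ (1 - γ) / √(n:ℝ)) with hwdef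
  have hw : 0 ≤ w := dt_nonneg _ _ _
  have hx0 : 0 < x := by linarith
  have hn4 : (4:ℝ) ≤ n := by exact_mod_cast hn
  have hn0 : (0:ℝ) < n := by linarith
  have hyn : (n:ℝ) ≤ n * x := by nlinarith
  set y := (n:ℝ) * x with hy
  have hy0 : 0 < y := by linarith
  by_cases hj : (j:ℝ) < y / 2 + 1
  · have h1 := avg_sq f hf B hB n (by omega) x (f x) (w * (2 + y)) (w * (n / (x * (1+x)))) (by
      intro s hs
      have := bound_large1 f B hB γ hγ0 hγ1 n x s hn0 hx0 hs
      rw [← hwdef] at this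
      linarith) j
    refine h1.trans ?_
    have : y ≤ 16 / y * ((j:ℝ) - y)^2 := by
      rw [div_mul_eq_mul_div, le_div_iff₀ hy0]
      nlinarith
    rw [mul_assoc w, ← mul_add]
    apply mul_le_mul_of_nonneg_left _ hw
    linarith
  · push Not at hj
    obtain ⟨i, rfl⟩ : ∃ i, j = i + 2 := by
      apply Nat.exists_eq_add_of_le'
      have : (2:ℝ) ≤ j := by linarith
      exact_mod_cast this
    have h1 := avg_sqi f hf B hB n (by omega) x (f x) (w * 2) (w * (n / (x * (1+x)))) (w * n) hx0 (by
      intro s hs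
      have := bound_large2 f B hB γ hγ0 hγ1 n x s hn0 hx0 hs
      rw [← hwdef] at this
      linarith) i
    refine h1.trans ?_
    push_cast at hj ⊢
    rw [mul_assoc w, mul_assoc w, ← mul_add, ← mul_add]
    apply mul_le_mul_of_nonneg_left _ hw
    have hk : y / 2 ≤ (i:ℝ) + 1 := by linarith
    have hk0 : 0 < (i:ℝ) + 1 := by positivity
    have key : (n:ℝ) * (((i:ℝ)+2) / y - 2 + x * (((n:ℝ)+1) / ((i:ℝ)+1)))
        = n * (((i:ℝ)+1-y)^2 / (y * ((i:ℝ)+1))) + n / y + y / ((i:ℝ)+1) := by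
      have hne : y ≠ 0 := hy0.ne'
      have hxe : x = y / n := by rw [hy]; field_simp
      rw [hxe]
      field_simp
      ring
    have a1 : y / ((i:ℝ)+1) ≤ 2 := by
      rw [div_le_iff₀ hk0]; linarith
    have a2 : (n:ℝ) / y ≤ 1 := by
      rw [div_le_iff₀ hy0]; linarith
    have a3 : (n:ℝ) * (((i:ℝ)+1-y)^2 / (y * ((i:ℝ)+1))) ≤ 2 / y * ((i:ℝ)+1-y)^2 := by
      have : (n:ℝ) / (y * ((i:ℝ)+1)) ≤ 2 / y := by
        rw [div_le_div_iff₀ (by positivity) hy0]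
        nlinarith
      calc (n:ℝ) * (((i:ℝ)+1-y)^2 / (y * ((i:ℝ)+1)))
          = (n:ℝ) / (y * ((i:ℝ)+1)) * ((i:ℝ)+1-y)^2 := by ring
        _ ≤ _ := by gcongr
    have a4 : 2 / y * ((i:ℝ)+1-y)^2 ≤ 16 / y * ((i:ℝ)+2-y)^2 + 4 := by
      have e : 16 / y * ((i:ℝ)+2-y)^2 + 4 - 2 / y * ((i:ℝ)+1-y)^2
        = (16 * ((i:ℝ)+2-y)^2 + 4 * y - 2 * ((i:ℝ)+1-y)^2) / y := by field_simp
      have : 0 ≤ 16 / y * ((i:ℝ)+2-y)^2 + 4 - 2 / y * ((i:ℝ)+1-y)^2 := by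
        rw [e]
        apply div_nonneg _ hy0.le
        nlinarith [sq_nonneg ((i:ℝ)+2-y), sq_nonneg ((i:ℝ)+2-y+1)]
      linarith
    rw [key]
    linarith

lemma sum_sq (θ : ℕ → ℝ) (s : ℝ) (hs : 1 < s) (h : Summable (fun j => θ j * s ^ j)) :
    Summable (fun j => θ j * (j:ℝ)^2) := by
  have h1 : Tendsto (fun j : ℕ => (j:ℝ)^2 / s^j) atTop (𝓝 0) :=
    tendsto_pow_const_div_const_pow_of_one_lt 2 hs
  have hs0 : 0 < s := by linarith
  refine summable_of_isBigO_nat h.abs ?_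
  refine Asymptotics.IsBigO.of_bound 1 ?_
  filter_upwards [h1.eventually (gt_mem_nhds (zero_lt_one))] with j hj
  rw [div_lt_one (by positivity)] at hj
  rw [one_mul, Real.norm_eq_abs, Real.norm_eq_abs, abs_abs, abs_mul, abs_mul]
  apply mul_le_mul_of_nonneg_left _ (abs_nonneg _)
  rw [abs_of_nonneg (by positivity), abs_of_nonneg (by positivity)]
  exact hj.le

lemma sum_lin (θ : ℕ → ℝ) (hθ : ∀ j, 0 ≤ θ j) (h0 : Summable θ)
    (h : Summable (fun j => θ j * (j:ℝ)^2)) : Summable (fun j => θ j * (j:ℝ)) := by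
  refine Summable.of_nonneg_of_le (fun j => mul_nonneg (hθ j) (by positivity)) (fun j => ?_)
    (h0.add h)
  have := hθ j
  nlinarith [sq_nonneg ((j:ℝ) - 1), mul_nonneg this (sq_nonneg ((j:ℝ) - 1)),
    mul_nonneg this (sq_nonneg ((j:ℝ)))]

lemma sum_mm (θ : ℕ → ℝ) (hθ : ∀ j, 0 ≤ θ j) (h0 : Summable θ)
    (h : Summable (fun j => θ j * (j:ℝ)^2)) (n : ℕ) (x : ℝ) :
    Summable (fun j => θ j * mm n x j) := by
  have h1 := sum_lin θ hθ h0 h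
  have := (((h.add h1).mul_right (((n:ℝ) * ((n:ℝ)-1))⁻¹)).sub (h1.mul_right (2 * x / n))).add
    (h0.mul_right (x^2))
  refine this.congr (fun j => ?_)
  unfold mm
  ring

lemma sum_cen (θ : ℕ → ℝ) (hθ : ∀ j, 0 ≤ θ j) (h0 : Summable θ)
    (h : Summable (fun j => θ j * (j:ℝ)^2)) (y : ℝ) :
    Summable (fun j => θ j * ((j:ℝ) - y)^2) := by
  have h1 := sum_lin θ hθ h0 h
  have := (h.sub (h1.mul_right (2 * y))).add (h0.mul_right (y^2))
  refine this.congr (fun j => ?_)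
  ring

lemma BDop_eq (ξ S T U V : ℝ → ℝ) (Θ : ℕ → ℝ → ℝ) (n : ℕ) (f : ℝ → ℝ) (x : ℝ)
    (h : Summable (fun j => Θ j (n * x) * cc f n j)) :
    BDop ξ S T U V Θ n f x
      = (S 1 * ξ (pnx T U V n x))⁻¹ * ∑' j, Θ j (n * x) * cc f n j := by
  rw [h.tsum_eq_zero_add]
  unfold BDop
  congr 2
  apply tsum_congr
  intro j
  simp only [cc, KK]
  ring

lemma cc_sq (n : ℕ) (hn : 2 ≤ n) (x : ℝ) (j : ℕ) : cc (fun t => (t - x)^2) n j = mm n x j := by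
  cases j with
  | zero => simp [cc, mm]
  | succ i =>
    simp only [cc]
    rw [mom_sq i n hn, mul_div_cancel_left₀ _ (betaB_pos i n).ne']

lemma mm_ge (n : ℕ) (hn : 2 ≤ n) (x : ℝ) (j : ℕ) : ((j:ℝ) - n * x)^2 / (n:ℝ)^2 ≤ mm n x j := by
  have hn2 : (2:ℝ) ≤ n := by exact_mod_cast hn
  have h1 : (0:ℝ) < n - 1 := by linarith
  have h0 : (0:ℝ) < n := by linarith
  have e : mm n x j - ((j:ℝ) - n * x)^2 / (n:ℝ)^2 = ((j:ℝ)^2 + n * j) / ((n:ℝ)^2 * (n-1)) := by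
    unfold mm
    field_simp
    ring
  have : 0 ≤ ((j:ℝ)^2 + n * j) / ((n:ℝ)^2 * (n-1)) := by positivity
  linarith

lemma final_sum (θ c e : ℕ → ℝ) (Z L w D : ℝ) (hZ : 0 < Z) (hθ : ∀ j, 0 ≤ θ j)
    (hsum : HasSum θ Z) (hc : Summable (fun j => θ j * c j))
    (he : Summable (fun j => θ j * e j)) (hle : ∀ j, |c j - L| ≤ w * e j) (hw : 0 ≤ w)
    (hD : ∑' j, θ j * e j ≤ Z * D) :
    |Z⁻¹ * ∑' j, θ j * c j - L| ≤ D * w := by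
  have h1 : Z⁻¹ * ∑' j, θ j * c j - L = Z⁻¹ * ∑' j, θ j * (c j - L) := by
    have : ∀ j, θ j * (c j - L) = θ j * c j - θ j * L := fun j => by ring
    simp_rw [this]
    rw [hc.tsum_sub (hsum.summable.mul_right L), tsum_mul_right, hsum.tsum_eq]
    field_simp
  have hew : Summable (fun j => w * (θ j * e j)) := he.mul_left w
  have hb : ∀ j, ‖θ j * (c j - L)‖ ≤ w * (θ j * e j) := by
    intro j
    rw [Real.norm_eq_abs, abs_mul, abs_of_nonneg (hθ j)]
    have := mul_le_mul_of_nonneg_left (hle j) (hθ j)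
    linarith
  have h2 : ‖∑' j, θ j * (c j - L)‖ ≤ w * ∑' j, θ j * e j := by
    rw [← tsum_mul_left]
    exact tsum_of_norm_bounded hew.hasSum hb
  rw [h1, abs_mul, abs_of_pos (inv_pos.2 hZ), inv_mul_le_iff₀ hZ]
  rw [Real.norm_eq_abs] at h2
  refine h2.trans ?_
  calc w * ∑' j, θ j * e j ≤ w * (Z * D) := mul_le_mul_of_nonneg_left hD hw
    _ = _ := by ring

theorem stmt15
    (ρ : ℝ) (hρ : 1 < ρ)
    (ξ S T U V : ℝ → ℝ) (Θ : ℕ → ℝ → ℝ)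
    (p q r u v : ℕ → ℝ)
    (hξser : ∀ t : ℝ, HasSum (fun j : ℕ => p j * t ^ j) (ξ t))
    (hξnn : ∀ t : ℝ, 0 ≤ ξ t)
    (hSser : ∀ s ∈ Set.Ioo (-ρ) ρ, HasSum (fun j : ℕ => q j * s ^ j) (S s))
    (hTser : ∀ s ∈ Set.Ioo (-ρ) ρ, HasSum (fun j : ℕ => r j * s ^ (j + 1)) (T s))
    (hUser : ∀ s ∈ Set.Ioo (-ρ) ρ, HasSum (fun j : ℕ => u j * s ^ (j + 2)) (U s))
    (hVser : ∀ s ∈ Set.Ioo (-ρ) ρ, HasSum (fun j : ℕ => v j * s ^ (j + 3)) (V s))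
    (hS1 : 0 < S 1)
    (hT'1 : deriv T 1 = 0) (hT''1 : deriv (deriv T) 1 = 0) (hU'1 : deriv U 1 = 1)
    (hΘnn : ∀ (j : ℕ) (y : ℝ), 0 ≤ y → 0 ≤ Θ j y)
    (hgen : ∀ y : ℝ, 0 ≤ y → ∀ s ∈ Set.Ioo (-ρ) ρ,
      HasSum (fun j : ℕ => Θ j y * s ^ j) (S s * ξ (y ^ 2 * T s + y * U s + V s)))
    (hξp : ∀ (m : ℕ), 1 ≤ m → ∀ y : ℝ, 0 ≤ y → 0 < ξ (pnx T U V m y))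
    (γ : ℝ) (hγ0 : 0 ≤ γ) (hγ1 : γ ≤ 1)
    (M : ℝ) (hM : 0 < M)
    (hmom : ∀ (n : ℕ), 2 ≤ n → ∀ x : ℝ, 0 ≤ x →
      BDop ξ S T U V Θ n (fun t => (t - x) ^ 2) x ≤ M * x * (1 + x) / (n : ℝ)) :
    ∃ D : ℝ, 0 < D ∧ ∃ n₀ : ℕ, ∀ f : ℝ → ℝ, ContinuousOn f (Set.Ici 0) →
      (∃ Mf : ℝ, ∀ y : ℝ, 0 ≤ y → |f y| ≤ Mf) →
      ∀ (n : ℕ), n₀ ≤ n → ∀ x : ℝ, 0 < x →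
        |BDop ξ S T U V Θ n f x - f x| ≤
          D * dtMod f γ (chi x ^ (1 - γ) / Real.sqrt (n : ℝ)) := by
  classical
  -- basic facts on the weights
  have hZ : ∀ y : ℝ, 0 ≤ y → HasSum (fun j => Θ j y) (S 1 * ξ (y^2 * T 1 + y * U 1 + V 1)) := by
    intro y hy
    simpa using hgen y hy 1 ⟨by linarith, hρ⟩
  have hS2 : ∀ y : ℝ, 0 ≤ y → Summable (fun j => Θ j y * (j:ℝ)^2) := by
    intro y hy
    refine sum_sq (fun j => Θ j y) ((1+ρ)/2) (by linarith) ?_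
    exact (hgen y hy ((1+ρ)/2) ⟨by linarith, by linarith⟩).summable
  have hpn : ∀ (n : ℕ) (x : ℝ), pnx T U V n x = ((n:ℝ) * x)^2 * T 1 + ((n:ℝ) * x) * U 1 + V 1 := by
    intro n x; unfold pnx; ring
  have hZpos : ∀ y : ℝ, 0 ≤ y → 0 < S 1 * ξ (y^2 * T 1 + y * U 1 + V 1) := by
    intro y hy
    have := hξp 1 le_rfl y hy
    rw [hpn] at this
    simp only [Nat.cast_one, one_mul] at this
    exact mul_pos hS1 this
  -- second moments
  have hmm : ∀ (n : ℕ), 2 ≤ n → ∀ x : ℝ, 0 ≤ x → ∑' j, Θ j (n * x) * mm n x j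
      ≤ (S 1 * ξ (((n:ℝ) * x)^2 * T 1 + ((n:ℝ) * x) * U 1 + V 1)) * (M * x * (1+x) / n) := by
    intro n hn x hx
    have hy : 0 ≤ (n:ℝ) * x := by positivity
    have h1 := hmom n hn x hx
    have hs := sum_mm (fun j => Θ j (n * x)) (fun j => hΘnn j _ hy) (hZ _ hy).summable (hS2 _ hy) n x
    rw [BDop_eq] at h1
    · simp_rw [cc_sq n hn] at h1
      rw [hpn, inv_mul_le_iff₀ (hZpos _ hy)] at h1
      exact h1
    · simp_rw [cc_sq n hn]
      exact hs
  have hcen : ∀ y : ℝ, 0 < y → ∑' j, Θ j y * ((j:ℝ) - y)^2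
      ≤ (S 1 * ξ (y^2 * T 1 + y * U 1 + V 1)) * (2 * M * y) := by
    intro y hy
    obtain ⟨N, hN⟩ := exists_nat_ge (y + 2)
    have hN2 : 2 ≤ N := by
      have : (2:ℝ) ≤ N := by linarith
      exact_mod_cast this
    have hN0 : (0:ℝ) < N := by linarith
    have h1 := hmm N hN2 (y / N) (by positivity)
    have hye : (N:ℝ) * (y / N) = y := by field_simp
    rw [hye] at h1
    have hs := sum_mm (fun j => Θ j y) (fun j => hΘnn j _ hy.le) (hZ _ hy.le).summable
      (hS2 _ hy.le) N (y / N)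
    have hs' := sum_cen (fun j => Θ j y) (fun j => hΘnn j _ hy.le) (hZ _ hy.le).summable
      (hS2 _ hy.le) y
    have h2 : ∑' j, Θ j y * ((j:ℝ) - y)^2 ≤ (N:ℝ)^2 * ∑' j, Θ j y * mm N (y/N) j := by
      rw [← tsum_mul_left]
      refine hs'.tsum_le_tsum (fun j => ?_) (hs.mul_left _)
      have h3 := mm_ge N hN2 (y/N) j
      rw [hye, div_le_iff₀ (by positivity)] at h3
      have := mul_le_mul_of_nonneg_left h3 (hΘnn j y hy.le)
      linarith
    refine h2.trans ?_
    have hZp := hZpos y hy.le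
    refine (mul_le_mul_of_nonneg_left h1 (by positivity)).trans ?_
    have e : (N:ℝ)^2 * ((S 1 * ξ (y^2 * T 1 + y * U 1 + V 1)) * (M * (y/N) * (1 + y/N) / N))
      = (S 1 * ξ (y^2 * T 1 + y * U 1 + V 1)) * (M * y * (1 + y/N)) := by
      field_simp
    rw [e]
    apply mul_le_mul_of_nonneg_left _ hZp.le
    have : y / N ≤ 1 := by rw [div_le_one hN0]; linarith
    have hMy : 0 < M * y := by positivity
    nlinarith
  refine ⟨9 + 33 * M, by positivity, 4, ?_⟩
  rintro f hf ⟨B, hB⟩ n hn x hx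
  have hn2 : 2 ≤ n := by omega
  have hn0 : (0:ℝ) < n := by
    have : 0 < n := by omega
    exact_mod_cast this
  have hw := dt_nonneg f γ (chi x ^ (1 - γ) / √(n:ℝ))
  have hy : 0 < (n:ℝ) * x := by positivity
  have hθ : ∀ j, 0 ≤ Θ j (n * x) := fun j => hΘnn j _ hy.le
  have hs0 := hZ _ hy.le
  have hs2 := hS2 _ hy.le
  have hsm := sum_mm (fun j => Θ j (n * x)) hθ hs0.summable hs2 n x
  have hsc := sum_cen (fun j => Θ j (n * x)) hθ hs0.summable hs2 (n * x)
  have hZp := hZpos _ hy.le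
  have hccB : ∀ j, |cc f n j| ≤ B := by
    intro j
    have := avg_sq f hf B hB n hn2 x 0 B 0 (by
      intro s hs
      simpa using hB s hs) j
    simpa using this
  have hsf : Summable (fun j => Θ j (n * x) * cc f n j) := by
    refine Summable.of_norm_bounded (hs0.summable.mul_right B) (fun j => ?_)
    rw [Real.norm_eq_abs, abs_mul, abs_of_nonneg (hθ j)]
    exact mul_le_mul_of_nonneg_left (hccB j) (hθ j)
  have hb1 := hmm n hn2 x hx.le
  have hb2 := hcen _ hy
  rw [BDop_eq ξ S T U V Θ n f x hsf, hpn]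
  -- a common form for both cases
  have common : ∀ α β κ : ℝ, 0 ≤ β → 0 ≤ κ →
      (∀ j, |cc f n j - f x| ≤ dtMod f γ (chi x ^ (1 - γ) / √(n:ℝ)) *
        (α + β * mm n x j + κ * ((j:ℝ) - n * x)^2)) →
      α + β * (M * x * (1+x) / n) + κ * (2 * M * (n * x)) ≤ 9 + 33 * M →
      |(S 1 * ξ (((n:ℝ) * x)^2 * T 1 + ((n:ℝ) * x) * U 1 + V 1))⁻¹ *
        (∑' j, Θ j (n * x) * cc f n j) - f x| ≤
        (9 + 33 * M) * dtMod f γ (chi x ^ (1 - γ) / √(n:ℝ)) := by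
    intro α β κ hβ hκ hle hD
    have e : ∀ j, Θ j (n * x) * (α + β * mm n x j + κ * ((j:ℝ) - n * x)^2)
        = Θ j (n * x) * α + β * (Θ j (n * x) * mm n x j)
          + κ * (Θ j (n * x) * ((j:ℝ) - n * x)^2) := fun j => by ring
    have s1 := hs0.summable.mul_right α
    have s2 := hsm.mul_left β
    have s3 := hsc.mul_left κ
    refine final_sum (fun j => Θ j (n * x)) (cc f n)
      (fun j => α + β * mm n x j + κ * ((j:ℝ) - n * x)^2) _ (f x) _ _ hZp hθ hs0 hsf ?_ hle hw ?_
    · simp_rw [e]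
      exact (s1.add s2).add s3
    · simp_rw [e]
      rw [(s1.add s2).tsum_add s3, s1.tsum_add s2, tsum_mul_right, tsum_mul_left, tsum_mul_left,
        hs0.tsum_eq]
      have i1 := mul_le_mul_of_nonneg_left hb1 hβ
      have i2 := mul_le_mul_of_nonneg_left hb2 hκ
      have i3 := mul_le_mul_of_nonneg_left hD hZp.le
      linarith
  rcases le_total x 1 with hx1 | hx1
  · refine common 2 (2 * n / (x * (1+x))) 0 (by positivity) le_rfl ?_ ?_
    · intro j
      have := avg_sq f hf B hB n hn2 x (f x) (dtMod f γ (chi x ^ (1 - γ) / √(n:ℝ)) * 2)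
        (dtMod f γ (chi x ^ (1 - γ) / √(n:ℝ)) * (2 * n / (x * (1+x)))) (by
        intro s hs
        have := bound_small f B hB γ hγ0 hγ1 n x s hn0 hx hx1 hs
        linarith) j
      linarith
    · have e : 2 * n / (x * (1+x)) * (M * x * (1+x) / n) = 2 * M := by
        field_simp
      rw [e]
      linarith
  · refine common 9 (n / (x * (1+x))) (16 / (n * x)) (by positivity) (by positivity)
      (large_j f hf B hB γ hγ0 hγ1 n hn x hx1) ?_
    have e : (n:ℝ) / (x * (1+x)) * (M * x * (1+x) / n) = M := by
      field_simp
    have e2 : 16 / ((n:ℝ) * x) * (2 * M * (n * x)) = 32 * M := by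
      field_simp
      norm_num
    rw [e, e2]
    linarith
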